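/- arXiv:math/0507472 — 2 statements merged into one kernel-verified Lean document; each statement's English description precedes it below -/
import Mathlib

section
/- Let S be a finite set of points in ℝ². Then ⋃_{i ≥ 0} Tⁱ(S) is dense in ℝ² if and only if S is not one of the following: (1) the empty set; (2) a set of collinear points; (3) a set of collinear points together with one additional point not on their common line; (4) the four vertices of a nondegenerate parallelogram; (5) the four vertices of a nondegenerate parallelogram together with the intersection point of its two diagonals. -/
open Set Filter

noncomputable section

/-- The line through two points in the plane `ℝ × ℝ`. -/
def line (a b : ℝ × ℝ) : AffineSubspace ℝ (ℝ × ℝ) := affineSpan ℝ {a, b}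

/-- The intersection operation `T`: the set of all intersection points of pairs of
distinct lines through pairs of distinct points of `S`. -/
def interT (S : Set (ℝ × ℝ)) : Set (ℝ × ℝ) :=
  {x | ∃ a ∈ S, ∃ b ∈ S, ∃ c ∈ S, ∃ d ∈ S,
    a ≠ b ∧ c ≠ d ∧ line a b ≠ line c d ∧ x ∈ line a b ∧ x ∈ line c d}

/-- `A, B, C, D` are the vertices of a nondegenerate parallelogram:
`B - A = C - D ≠ 0` and `A, B, D` are not collinear. -/
def IsParallelogram (A B C D : ℝ × ℝ) : Prop :=
  B - A = C - D ∧ B - A ≠ 0 ∧ ¬ Collinear ℝ ({A, B, D} : Set (ℝ × ℝ))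

/-- Twice the signed area of a triangle. -/
def D3 (a b c : ℝ × ℝ) : ℝ := (b.1 - a.1) * (c.2 - a.2) - (b.2 - a.2) * (c.1 - a.1)

/-- The cross product of `b - a` and `d - c`. -/
def cr4 (a b c d : ℝ × ℝ) : ℝ := (b.1 - a.1) * (d.2 - c.2) - (b.2 - a.2) * (d.1 - c.1)

/-- Sets closed under intersecting non-parallel lines. -/
def TC (K : Set (ℝ × ℝ)) : Prop := ∀ a b c d x, a ∈ K → b ∈ K → c ∈ K → d ∈ K →
  cr4 a b c d ≠ 0 → D3 a b x = 0 → D3 c d x = 0 → x ∈ K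

/-- The affine map sending the standard frame to `A, P, Q`. -/
def phi (A P Q z : ℝ × ℝ) : ℝ × ℝ :=
  (A.1 + z.1 * (P.1 - A.1) + z.2 * (Q.1 - A.1), A.2 + z.1 * (P.2 - A.2) + z.2 * (Q.2 - A.2))

lemma D3_phi (A P Q a b c : ℝ × ℝ) :
    D3 (phi A P Q a) (phi A P Q b) (phi A P Q c) = D3 A P Q * D3 a b c := by
  simp only [D3, phi]; ring

lemma cr4_phi (A P Q a b c d : ℝ × ℝ) :
    cr4 (phi A P Q a) (phi A P Q b) (phi A P Q c) (phi A P Q d) = D3 A P Q * cr4 a b c d := by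
  simp only [D3, cr4, phi]; ring

lemma phi_surj (A P Q : ℝ × ℝ) (h : D3 A P Q ≠ 0) (z : ℝ × ℝ) :
    z = phi A P Q (D3 A z Q / D3 A P Q, D3 A P z / D3 A P Q) := by
  have h1 : z.1 * D3 A P Q = A.1 * D3 A P Q + D3 A z Q * (P.1 - A.1) + D3 A P z * (Q.1 - A.1) := by
    simp only [D3]; ring
  have h2 : z.2 * D3 A P Q = A.2 * D3 A P Q + D3 A z Q * (P.2 - A.2) + D3 A P z * (Q.2 - A.2) := by
    simp only [D3]; ring
  ext
  · simp only [phi]; field_simp; linarith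
  · simp only [phi]; field_simp; linarith

lemma TC_preimage {K : Set (ℝ × ℝ)} (hK : TC K) (A P Q : ℝ × ℝ) (h : D3 A P Q ≠ 0) :
    TC (phi A P Q ⁻¹' K) := by
  intro a b c d x ha hb hc hd h1 h2 h3
  refine hK _ _ _ _ _ ha hb hc hd ?_ ?_ ?_
  · rw [cr4_phi]; exact mul_ne_zero h h1
  · rw [D3_phi, h2, mul_zero]
  · rw [D3_phi, h3, mul_zero]

lemma phi_cont (A P Q : ℝ × ℝ) : Continuous (phi A P Q) := by
  unfold phi; fun_prop

/-- the intersection point -/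
def ipt (p : (ℝ × ℝ) × (ℝ × ℝ) × (ℝ × ℝ) × (ℝ × ℝ)) : ℝ × ℝ :=
  (p.1.1 + cr4 p.1 p.2.2.1 p.2.2.1 p.2.2.2 / cr4 p.1 p.2.1 p.2.2.1 p.2.2.2 * (p.2.1.1 - p.1.1),
   p.1.2 + cr4 p.1 p.2.2.1 p.2.2.1 p.2.2.2 / cr4 p.1 p.2.1 p.2.2.1 p.2.2.2 * (p.2.1.2 - p.1.2))

lemma inter_unique {a b c d x y : ℝ × ℝ} (h : cr4 a b c d ≠ 0) (h1 : D3 a b x = 0)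
    (h2 : D3 c d x = 0) (h3 : D3 a b y = 0) (h4 : D3 c d y = 0) : x = y := by
  simp only [D3, cr4] at *
  ext
  · apply mul_left_cancel₀ h; grind
  · apply mul_left_cancel₀ h; grind

lemma ipt_left {a b c d : ℝ × ℝ} : D3 a b (ipt (a, b, c, d)) = 0 := by
  simp only [D3, ipt]; ring

lemma ipt_right {a b c d : ℝ × ℝ} (h : cr4 a b c d ≠ 0) : D3 c d (ipt (a, b, c, d)) = 0 := by
  simp only [D3, ipt]
  field_simp
  simp only [cr4]; ring

lemma TC_closure {U : Set (ℝ × ℝ)} (hU : TC U) : TC (closure U) := by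
  intro a b c d x ha hb hc hd h h1 h2
  have hx : x = ipt (a, b, c, d) := inter_unique h h1 h2 ipt_left (ipt_right h)
  rw [hx]
  let V : Set ((ℝ × ℝ) × (ℝ × ℝ) × (ℝ × ℝ) × (ℝ × ℝ)) := {p | cr4 p.1 p.2.1 p.2.2.1 p.2.2.2 ≠ 0}
  have hc0 : Continuous fun p : (ℝ × ℝ) × (ℝ × ℝ) × (ℝ × ℝ) × (ℝ × ℝ) =>
      cr4 p.1 p.2.1 p.2.2.1 p.2.2.2 := by unfold cr4; fun_prop
  have hV : IsOpen V := isOpen_ne_fun hc0 continuous_const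
  have hmem : (a, b, c, d) ∈ closure (V ∩ (U ×ˢ U ×ˢ U ×ˢ U)) := by
    apply hV.inter_closure
    refine ⟨h, ?_⟩
    simp only [closure_prod_eq]
    exact ⟨ha, hb, hc, hd⟩
  have hcont : ContinuousAt ipt (a, b, c, d) := by
    have hc1 : Continuous fun p : (ℝ × ℝ) × (ℝ × ℝ) × (ℝ × ℝ) × (ℝ × ℝ) =>
      cr4 p.1 p.2.2.1 p.2.2.1 p.2.2.2 := by unfold cr4; fun_prop
    have hq := (hc1.continuousAt (x := (a, b, c, d))).div (hc0.continuousAt (x := (a, b, c, d))) h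
    unfold ipt
    apply ContinuousAt.prodMk
    · exact ContinuousAt.add (by fun_prop) (hq.mul (by fun_prop))
    · exact ContinuousAt.add (by fun_prop) (hq.mul (by fun_prop))
  refine hcont.continuousWithinAt.mem_closure hmem ?_
  rintro ⟨a', b', c', d'⟩ ⟨hv, ha', hb', hc', hd'⟩
  exact hU _ _ _ _ _ ha' hb' hc' hd' hv ipt_left (ipt_right hv)

lemma gap {I : Set ℝ} (hI : IsClosed I) {b : ℝ} (h0 : (0 : ℝ) ∈ I) (hb : b ∈ I)
    (hm : ∀ s ∈ I, ∀ t ∈ I, s < t → 0 ≤ s → t ≤ b → (s + t) / 2 ∈ I) (x : ℝ) (hx0 : 0 ≤ x) (hxb : x ≤ b) :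
    x ∈ I := by
  by_contra hx
  have hc1 : IsCompact (I ∩ Icc 0 x) := (isCompact_Icc).inter_left hI
  have hc2 : IsCompact (I ∩ Icc x b) := (isCompact_Icc).inter_left hI
  obtain ⟨s, ⟨hsI, hs0, hsx⟩, hs⟩ := hc1.exists_isGreatest ⟨0, h0, le_refl _, hx0⟩
  obtain ⟨t, ⟨htI, htx, htb⟩, ht⟩ := hc2.exists_isLeast ⟨b, hb, hxb, le_refl _⟩
  have hsx' : s < x := lt_of_le_of_ne hsx (fun h => hx (h ▸ hsI))
  have htx' : x < t := lt_of_le_of_ne htx (fun h => hx (h ▸ htI))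
  have hmI := hm s hsI t htI (by linarith) hs0 htb
  rcases le_total ((s + t) / 2) x with h | h
  · have := hs ⟨hmI, by linarith, h⟩
    linarith
  · have := ht ⟨hmI, h, by linarith⟩
    linarith

lemma univ_of_open {K W : Set (ℝ × ℝ)} (hK : TC K) (hW : IsOpen W) (hWK : W ⊆ K) (w : ℝ × ℝ)
    (hw : w ∈ W) : K = univ := by
  rw [eq_univ_iff_forall]
  intro X
  by_cases hX : X = w
  · exact hX ▸ hWK hw
  have ev1 : ∀ᶠ e : ℝ in nhds 0, (w.1 + e * (X.1 - w.1), w.2 + e * (X.2 - w.2)) ∈ W := by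
    have : Continuous fun e : ℝ => (w.1 + e * (X.1 - w.1), w.2 + e * (X.2 - w.2)) := by fun_prop
    exact this.continuousAt.eventually_mem (by simpa using hW.mem_nhds hw)
  have ev2 : ∀ᶠ e : ℝ in nhds 0, (w.1 - e * (X.2 - w.2), w.2 + e * (X.1 - w.1)) ∈ W := by
    have : Continuous fun e : ℝ => (w.1 - e * (X.2 - w.2), w.2 + e * (X.1 - w.1)) := by fun_prop
    exact this.continuousAt.eventually_mem (by simpa using hW.mem_nhds hw)
  have ev3 : ∀ᶠ e : ℝ in nhds 0, ((w.1 - e * (X.2 - w.2)) + e * (X.1 - (w.1 - e * (X.2 - w.2))),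
      (w.2 + e * (X.1 - w.1)) + e * (X.2 - (w.2 + e * (X.1 - w.1)))) ∈ W := by
    have : Continuous fun e : ℝ => ((w.1 - e * (X.2 - w.2)) + e * (X.1 - (w.1 - e * (X.2 - w.2))),
      (w.2 + e * (X.1 - w.1)) + e * (X.2 - (w.2 + e * (X.1 - w.1)))) := by fun_prop
    exact this.continuousAt.eventually_mem (by simpa using hW.mem_nhds hw)
  have hev := (ev1.and (ev2.and ev3))
  obtain ⟨e, ⟨h1, h2, h3⟩, he⟩ := ((hev.filter_mono nhdsWithin_le_nhds).and
    (self_mem_nhdsWithin : Ioi (0 : ℝ) ∈ nhdsWithin 0 (Ioi 0))).exists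
  have he' : (0 : ℝ) < e := he
  have hn : 0 < (X.1 - w.1) ^ 2 + (X.2 - w.2) ^ 2 := by
    by_contra hcon
    apply hX
    ext <;> nlinarith [sq_nonneg (X.1 - w.1), sq_nonneg (X.2 - w.2)]
  refine hK _ _ _ _ X (hWK hw) (hWK h1) (hWK h2) (hWK h3) ?_ ?_ ?_
  · have : cr4 w (w.1 + e * (X.1 - w.1), w.2 + e * (X.2 - w.2)) (w.1 - e * (X.2 - w.2), w.2 + e * (X.1 - w.1))
      ((w.1 - e * (X.2 - w.2)) + e * (X.1 - (w.1 - e * (X.2 - w.2))),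
      (w.2 + e * (X.1 - w.1)) + e * (X.2 - (w.2 + e * (X.1 - w.1)))) =
      - (e ^ 3 * ((X.1 - w.1) ^ 2 + (X.2 - w.2) ^ 2)) := by simp only [cr4]; ring
    rw [this]
    have := mul_pos (pow_pos he' 3) hn
    linarith
  · simp only [D3]; ring
  · simp only [D3]; ring

/-- Projective coordinates on the standard triangle. -/
def pt (s t : ℝ) : ℝ × ℝ := (s / (1 + s + t), t / (1 + s + t))

/-- Determinant criterion for points in projective coordinates. -/
lemma D3_pt {s t s' t' s'' t'' : ℝ} (h : 0 < 1 + s + t) (h' : 0 < 1 + s' + t') (h'' : 0 < 1 + s'' + t'')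
    (hd : (s' - s) * (t'' - t) - (t' - t) * (s'' - s) = 0) :
    D3 (pt s t) (pt s' t') (pt s'' t'') = 0 := by
  simp only [D3, pt]
  field_simp
  linear_combination (1 + s + t) * hd

lemma proj1 {K : Set (ℝ × ℝ)} (hK : TC K) (hA : ((0, 0) : ℝ × ℝ) ∈ K) (hP : ((1, 0) : ℝ × ℝ) ∈ K)
    (hQ : ((0, 1) : ℝ × ℝ) ∈ K) {s t : ℝ} (hs : 0 ≤ s) (ht : 0 ≤ t) (h : pt s t ∈ K) : pt s 0 ∈ K := by
  refine hK _ _ _ _ _ hQ h hA hP ?_ ?_ ?_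
  · have : cr4 (0, 1) (pt s t) (0, 0) (1, 0) = (1 + s) / (1 + s + t) := by
      simp only [cr4, pt]; field_simp; ring
    rw [this]; positivity
  · simp only [D3, pt]; field_simp; ring
  · simp only [D3, pt]; ring

lemma proj2 {K : Set (ℝ × ℝ)} (hK : TC K) (hA : ((0, 0) : ℝ × ℝ) ∈ K) (hP : ((1, 0) : ℝ × ℝ) ∈ K)
    (hQ : ((0, 1) : ℝ × ℝ) ∈ K) {s t : ℝ} (hs : 0 ≤ s) (ht : 0 ≤ t) (h : pt s t ∈ K) : pt 0 t ∈ K := by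
  refine hK _ _ _ _ _ hP h hA hQ ?_ ?_ ?_
  · have : cr4 (1, 0) (pt s t) (0, 0) (0, 1) = -((1 + t) / (1 + s + t)) := by
      simp only [cr4, pt]; field_simp; ring
    rw [this]; exact neg_ne_zero.2 (by positivity)
  · simp only [D3, pt]; field_simp; ring
  · simp only [D3, pt]; ring

lemma join {K : Set (ℝ × ℝ)} (hK : TC K) (hP : ((1, 0) : ℝ × ℝ) ∈ K)
    (hQ : ((0, 1) : ℝ × ℝ) ∈ K) {s t : ℝ} (hs : 0 ≤ s) (ht : 0 ≤ t) (h : pt s 0 ∈ K) (h' : pt 0 t ∈ K) :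
    pt s t ∈ K := by
  refine hK _ _ _ _ _ hQ h hP h' ?_ ?_ ?_
  · have : cr4 (0, 1) (pt s 0) (1, 0) (pt 0 t) = -((1 + s + t) / ((1 + s) * (1 + t))) := by
      simp only [cr4, pt, add_zero]; field_simp; ring
    rw [this]; exact neg_ne_zero.2 (by positivity)
  · simp only [D3, pt, add_zero]; field_simp; ring
  · simp only [D3, pt, add_zero]; field_simp; ring

lemma mid1 {K : Set (ℝ × ℝ)} (hK : TC K) (hA : ((0, 0) : ℝ × ℝ) ∈ K) (hP : ((1, 0) : ℝ × ℝ) ∈ K)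
    (hQ : ((0, 1) : ℝ × ℝ) ∈ K) {s s' g : ℝ} (hs : 0 ≤ s) (hss : s < s') (hg : 0 < g)
    (h : pt s 0 ∈ K) (h' : pt s' 0 ∈ K) (h'' : pt 0 g ∈ K) : pt ((s + s') / 2) 0 ∈ K := by
  have hs' : 0 < s' := by linarith
  have hE := join hK hP hQ hs hg.le h h''
  have hE' := join hK hP hQ hs'.le hg.le h' h''
  refine proj1 hK hA hP hQ (t := g / 2) (by positivity) (by positivity) ?_
  refine hK _ _ _ _ _ h hE' h' hE ?_ ?_ ?_
  · have : cr4 (pt s 0) (pt s' g) (pt s' 0) (pt s g) =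
        g * (s' - s) * (2 + s + s' + g) / ((1 + s) * (1 + s') * (1 + s + g) * (1 + s' + g)) := by
      simp only [cr4, pt, add_zero]; field_simp; ring
    rw [this]
    have : 0 < s' - s := by linarith
    positivity
  · apply D3_pt <;> first | positivity | ring
  · apply D3_pt <;> first | positivity | ring

lemma mid2 {K : Set (ℝ × ℝ)} (hK : TC K) (hA : ((0, 0) : ℝ × ℝ) ∈ K) (hP : ((1, 0) : ℝ × ℝ) ∈ K)
    (hQ : ((0, 1) : ℝ × ℝ) ∈ K) {s s' g : ℝ} (hs : 0 ≤ s) (hss : s < s') (hg : 0 < g)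
    (h : pt 0 s ∈ K) (h' : pt 0 s' ∈ K) (h'' : pt g 0 ∈ K) : pt 0 ((s + s') / 2) ∈ K := by
  have hs' : 0 < s' := by linarith
  have hE := join hK hP hQ hg.le hs h'' h
  have hE' := join hK hP hQ hg.le hs'.le h'' h'
  refine proj2 hK hA hP hQ (s := g / 2) (by positivity) (by positivity) ?_
  refine hK _ _ _ _ _ h hE' h' hE ?_ ?_ ?_
  · have : cr4 (pt 0 s) (pt g s') (pt 0 s') (pt g s) =
        -(g * (s' - s) * (2 + s + s' + g) / ((1 + s) * (1 + s') * (1 + s + g) * (1 + s' + g))) := by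
      simp only [cr4, pt, add_zero]; field_simp; ring
    rw [this]
    have : 0 < s' - s := by linarith
    exact neg_ne_zero.2 (by positivity)
  · apply D3_pt <;> first | positivity | ring
  · apply D3_pt <;> first | positivity | ring

lemma tri_std {K : Set (ℝ × ℝ)} (hK : TC K) (hcl : IsClosed K) (hA : ((0, 0) : ℝ × ℝ) ∈ K)
    (hP : ((1, 0) : ℝ × ℝ) ∈ K) (hQ : ((0, 1) : ℝ × ℝ) ∈ K) {β γ : ℝ} (hβ : 0 < β) (hγ : 0 < γ)
    (hC : pt β γ ∈ K) : K = univ := by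
  have hB := proj1 hK hA hP hQ hβ.le hγ.le hC
  have hD := proj2 hK hA hP hQ hβ.le hγ.le hC
  have h00 : pt 0 0 ∈ K := by simpa [pt] using hA
  have hc : ContinuousOn (fun x : ℝ => x / (1 + x)) (Ici 0) :=
    ContinuousOn.div (by fun_prop) (by fun_prop) (fun x hx => by
      have : (0 : ℝ) ≤ x := hx
      positivity)
  have hI1 : ∀ x, 0 ≤ x → x ≤ β → pt x 0 ∈ K := by
    have hcl' : IsClosed (Ici (0 : ℝ) ∩ (fun x => pt x 0) ⁻¹' K) := by
      apply ContinuousOn.preimage_isClosed_of_isClosed _ isClosed_Ici hcl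
      simp only [pt, add_zero, zero_div]
      exact hc.prodMk continuousOn_const
    intro x h0 h1
    refine (gap hcl' (b := β) ⟨mem_Ici.2 le_rfl, h00⟩ ⟨hβ.le, hB⟩ ?_ x h0 h1).2
    intro s hs t ht hst h0 hb
    exact ⟨by have := ht.1; simp only [mem_Ici] at *; linarith, mid1 hK hA hP hQ h0 hst hγ hs.2 ht.2 hD⟩
  have hI2 : ∀ x, 0 ≤ x → x ≤ γ → pt 0 x ∈ K := by
    have hcl' : IsClosed (Ici (0 : ℝ) ∩ (fun x => pt 0 x) ⁻¹' K) := by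
      apply ContinuousOn.preimage_isClosed_of_isClosed _ isClosed_Ici hcl
      simp only [pt, add_zero, zero_div]
      exact continuousOn_const.prodMk hc
    intro x h0 h1
    refine (gap hcl' (b := γ) ⟨mem_Ici.2 le_rfl, h00⟩ ⟨hγ.le, hD⟩ ?_ x h0 h1).2
    intro s hs t ht hst h0 hb
    exact ⟨by have := ht.1; simp only [mem_Ici] at *; linarith, mid2 hK hA hP hQ h0 hst hβ hs.2 ht.2 hB⟩
  let W : Set (ℝ × ℝ) := {z | 0 < 1 - z.1 - z.2} ∩ ({z | 0 < z.1} ∩ ({z | 0 < z.2} ∩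
    ({z | z.1 < β * (1 - z.1 - z.2)} ∩ {z | z.2 < γ * (1 - z.1 - z.2)})))
  have hW : IsOpen W := by
    refine IsOpen.inter ?_ (IsOpen.inter ?_ (IsOpen.inter ?_ (IsOpen.inter ?_ ?_))) <;>
      exact isOpen_lt (by fun_prop) (by fun_prop)
  refine univ_of_open hK hW ?_ (pt (β / 2) (γ / 2)) ?_
  · rintro ⟨x, y⟩ ⟨h1, h2, h3, h4, h5⟩
    simp only [mem_ofPred_eq] at h1 h2 h3 h4 h5
    have := join hK hP hQ (s := x / (1 - x - y)) (t := y / (1 - x - y)) (by positivity) (by positivity)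
      (hI1 _ (by positivity) (by rw [div_le_iff₀ h1]; linarith))
      (hI2 _ (by positivity) (by rw [div_le_iff₀ h1]; linarith))
    convert this using 1
    have e : 1 + x / (1 - x - y) + y / (1 - x - y) = 1 / (1 - x - y) := by field_simp; ring
    simp only [pt, e]
    ext <;> simp only [] <;> field_simp
  · have e : 1 - (β / 2) / (1 + β / 2 + γ / 2) - (γ / 2) / (1 + β / 2 + γ / 2) = 1 / (1 + β / 2 + γ / 2) := by
      field_simp; ring
    refine ⟨?_, ?_, ?_, ?_, ?_⟩ <;> simp only [mem_ofPred_eq, pt, e]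
    · positivity
    · positivity
    · positivity
    · rw [mul_one_div]; gcongr; linarith
    · rw [mul_one_div]; gcongr; linarith

/-- A triangle with an interior point. -/
lemma tri {K : Set (ℝ × ℝ)} (hK : TC K) (hcl : IsClosed K) {A P Q C : ℝ × ℝ} (hA : A ∈ K) (hP : P ∈ K)
    (hQ : Q ∈ K) (hC : C ∈ K) (h : D3 A P Q ≠ 0) {z x y : ℝ} (hz : 0 < z) (hx : 0 < x) (hy : 0 < y)
    (hs : z + x + y = 1) (hC1 : C.1 = z * A.1 + x * P.1 + y * Q.1)
    (hC2 : C.2 = z * A.2 + x * P.2 + y * Q.2) : K = univ := by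
  have hu : phi A P Q ⁻¹' K = univ := by
    refine tri_std (TC_preimage hK A P Q h) (hcl.preimage (phi_cont A P Q)) (β := x / z) (γ := y / z)
      ?_ ?_ ?_ (by positivity) (by positivity) ?_
    · simpa [phi] using hA
    · simpa [phi] using hP
    · simpa [phi] using hQ
    · have e : 1 + x / z + y / z = 1 / z := by field_simp; linarith
      have e1 : pt (x / z) (y / z) = (x, y) := by
        simp only [pt, e]; ext <;> simp only [] <;> field_simp
      have : phi A P Q (x, y) = C := by
        have hz' : z = 1 - x - y := by linarith
        ext <;> simp only [phi, hC1, hC2, hz'] <;> ring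
      rw [mem_preimage, e1, this]; exact hC
  rw [eq_univ_iff_forall] at *
  intro w
  rw [phi_surj A P Q h w]
  exact hu _

lemma univ_of_preimage {K : Set (ℝ × ℝ)} {A P Q : ℝ × ℝ} (h : D3 A P Q ≠ 0)
    (hu : phi A P Q ⁻¹' K = univ) : K = univ := by
  rw [eq_univ_iff_forall] at *
  intro w
  rw [phi_surj A P Q h w]
  exact hu _

lemma conv_std {K : Set (ℝ × ℝ)} (hK : TC K) (hcl : IsClosed K) (hA : ((0, 0) : ℝ × ℝ) ∈ K)
    (hB : ((1, 0) : ℝ × ℝ) ∈ K) (hC : ((0, 1) : ℝ × ℝ) ∈ K) {x y : ℝ} (hD : ((x, y) : ℝ × ℝ) ∈ K)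
    (hx : 0 < x) (hy : 0 < y) (hxy : 1 < x + y) (hy1 : y ≠ 1) : K = univ := by
  have hy1' : 1 - y ≠ 0 := fun h => hy1 (by linarith)
  have hX : ((x / (1 - y), 0) : ℝ × ℝ) ∈ K := by
    refine hK _ _ _ _ _ hA hB hC hD ?_ ?_ ?_
    · simp only [cr4]; intro h; apply hy1; linarith
    · simp only [D3]; ring
    · simp only [D3]; field_simp; ring
  have hR : ((x / (x + y), y / (x + y)) : ℝ × ℝ) ∈ K := by
    refine hK _ _ _ _ _ hB hC hA hD ?_ ?_ ?_
    · simp only [cr4]; intro h; linarith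
    · simp only [D3]; field_simp; ring
    · simp only [D3]; field_simp; ring
  rcases lt_or_gt_of_ne hy1 with hlt | hgt
  · have h1 : 0 < 1 - y := by linarith
    have h2 : 0 < x + y - 1 := by linarith
    refine tri hK hcl hA hX hC hR (z := (x + y - 1) / (x + y)) (x := (1 - y) / (x + y)) (y := y / (x + y))
      ?_ (by positivity) (by positivity) (by positivity) ?_ ?_ ?_
    · simp only [D3]
      have : 0 < x / (1 - y) := by positivity
      intro h; linarith
    · field_simp; ring
    · simp only []; field_simp; ring
    · simp only []; field_simp; ring
  · have h1 : 0 < y - 1 := by linarith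
    refine tri hK hcl hX hB hD hR (z := (y - 1) / (x + y)) (x := x / (x + y)) (y := 1 / (x + y))
      ?_ (by positivity) (by positivity) (by positivity) ?_ ?_ ?_
    · simp only [D3]
      intro h
      field_simp at h
      have : y * (1 - y - x) = 0 := by linarith
      rcases mul_eq_zero.1 this with h | h <;> linarith
    · field_simp; ring
    · simp only []; field_simp; ring
    · simp only []; field_simp; ring

lemma conv {K : Set (ℝ × ℝ)} (hK : TC K) (hcl : IsClosed K) {A B C D : ℝ × ℝ} (hA : A ∈ K) (hB : B ∈ K)
    (hC : C ∈ K) (hD : D ∈ K) (h : D3 A B C ≠ 0) {z x y : ℝ} (hz : z < 0) (hx : 0 < x) (hy : 0 < y)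
    (hs : z + x + y = 1) (hC1 : D.1 = z * A.1 + x * B.1 + y * C.1)
    (hC2 : D.2 = z * A.2 + x * B.2 + y * C.2) (hn : ¬ (x = 1 ∧ y = 1)) : K = univ := by
  have key : ∀ {B C : ℝ × ℝ} {x y : ℝ}, B ∈ K → C ∈ K → D3 A B C ≠ 0 → 0 < x → 0 < y → z + x + y = 1 →
      D.1 = z * A.1 + x * B.1 + y * C.1 → D.2 = z * A.2 + x * B.2 + y * C.2 → y ≠ 1 → K = univ := by
    intro B C x y hB hC h hx hy hs hC1 hC2 hy1
    refine univ_of_preimage h (conv_std (TC_preimage hK A B C h) (hcl.preimage (phi_cont A B C)) (x := x)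
      (y := y) ?_ ?_ ?_ ?_ hx hy (by linarith) hy1)
    · simpa [phi] using hA
    · simpa [phi] using hB
    · simpa [phi] using hC
    · have : phi A B C (x, y) = D := by
        have hz' : z = 1 - x - y := by linarith
        ext <;> simp only [phi, hC1, hC2, hz'] <;> ring
      rw [mem_preimage, this]; exact hD
  by_cases hy1 : y = 1
  · refine key (x := y) (y := x) hC hB ?_ hy hx (by linarith) (by linarith) (by linarith)
      (fun h => hn ⟨h, hy1⟩)
    intro h'; apply h; simp only [D3] at *; linarith
  · exact key hB hC h hx hy hs hC1 hC2 hy1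

/-- Inverting the barycentric relation. -/
lemma inv_tri {K : Set (ℝ × ℝ)} (hK : TC K) (hcl : IsClosed K) {A B C D : ℝ × ℝ} (hA : A ∈ K) (hB : B ∈ K)
    (hC : C ∈ K) (hD : D ∈ K) (h : D3 A B C ≠ 0) {z x y : ℝ} (hz : 0 < z) (hx : x < 0) (hy : y < 0)
    (hs : z + x + y = 1) (hC1 : D.1 = z * A.1 + x * B.1 + y * C.1)
    (hC2 : D.2 = z * A.2 + x * B.2 + y * C.2) : K = univ := by
  have hz' : z = 1 - x - y := by linarith
  have hx' : 0 < -x := by linarith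
  have hy' : 0 < -y := by linarith
  refine tri hK hcl hD hB hC hA (z := 1 / z) (x := -x / z) (y := -y / z) ?_ (by positivity) (by positivity)
    (by positivity) ?_ ?_ ?_
  · have : D3 D B C = z * D3 A B C := by simp only [D3, hC1, hC2, hz']; ring
    rw [this]; exact mul_ne_zero hz.ne' h
  · field_simp; linarith
  · field_simp; linarith
  · field_simp; linarith

lemma quad {K : Set (ℝ × ℝ)} (hK : TC K) (hcl : IsClosed K) {A B C D : ℝ × ℝ} (hA : A ∈ K) (hB : B ∈ K)
    (hC : C ∈ K) (hD : D ∈ K) (h : D3 A B C ≠ 0) {z x y : ℝ} (hz : z ≠ 0) (hx : x ≠ 0) (hy : y ≠ 0)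
    (hs : z + x + y = 1) (hC1 : D.1 = z * A.1 + x * B.1 + y * C.1)
    (hC2 : D.2 = z * A.2 + x * B.2 + y * C.2) (h1 : ¬ (x = 1 ∧ y = 1)) (h2 : ¬ (z = 1 ∧ y = 1))
    (h3 : ¬ (z = 1 ∧ x = 1)) : K = univ := by
  have hB' : D3 B A C ≠ 0 := by intro h'; apply h; simp only [D3] at *; linarith
  have hC' : D3 C A B ≠ 0 := by intro h'; apply h; simp only [D3] at *; linarith
  rcases lt_or_gt_of_ne hz with hz | hz <;> rcases lt_or_gt_of_ne hx with hx | hx <;>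
    rcases lt_or_gt_of_ne hy with hy | hy
  · linarith
  · exact inv_tri hK hcl hC hA hB hD hC' hy hz hx (by linarith) (by linarith) (by linarith)
  · exact inv_tri hK hcl hB hA hC hD hB' hx hz hy (by linarith) (by linarith) (by linarith)
  · exact conv hK hcl hA hB hC hD h hz hx hy hs hC1 hC2 h1
  · exact inv_tri hK hcl hA hB hC hD h hz hx hy hs hC1 hC2
  · exact conv hK hcl hB hA hC hD hB' hx hz hy (by linarith) (by linarith) (by linarith) h2
  · exact conv hK hcl hC hA hB hD hC' hy hz hx (by linarith) (by linarith) (by linarith) h3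
  · exact tri hK hcl hA hB hC hD h hz hx hy hs hC1 hC2

/-- In coordinates: a parallelogram together with another point which is not its center. -/
lemma para_std {K : Set (ℝ × ℝ)} (hK : TC K) (hcl : IsClosed K) (hA : ((0, 0) : ℝ × ℝ) ∈ K)
    (hB : ((1, 0) : ℝ × ℝ) ∈ K) (hD : ((0, 1) : ℝ × ℝ) ∈ K) (hC : ((1, 1) : ℝ × ℝ) ∈ K) {x y : ℝ}
    (hE : ((x, y) : ℝ × ℝ) ∈ K) (h1 : ¬ (x = 0 ∧ y = 0)) (h2 : ¬ (x = 1 ∧ y = 0)) (h3 : ¬ (x = 0 ∧ y = 1))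
    (h4 : ¬ (x = 1 ∧ y = 1)) (h5 : ¬ (x = 1 / 2 ∧ y = 1 / 2)) : K = univ := by
  by_contra hne
  have q1 : ¬ (1 - x - y ≠ 0 ∧ x ≠ 0 ∧ y ≠ 0 ∧ ¬ (1 - x - y = 1 ∧ y = 1) ∧ ¬ (1 - x - y = 1 ∧ x = 1)) := by
    rintro ⟨a, b, c, d, e⟩
    exact hne (quad hK hcl hA hB hD hE (by simp [D3]) a b c (by ring) (by simp) (by simp) h4 d e)
  have q2 : ¬ (x - y ≠ 0 ∧ 1 - x ≠ 0 ∧ y ≠ 0 ∧ ¬ (x - y = 1 ∧ y = 1) ∧ ¬ (x - y = 1 ∧ 1 - x = 1)) := by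
    rintro ⟨a, b, c, d, e⟩
    exact hne (quad hK hcl hB hA hC hE (by simp [D3]) a b c (by ring) (by simp) (by simp)
      (fun h => h3 ⟨by linarith [h.1], h.2⟩) d e)
  have q3 : ¬ (y - x ≠ 0 ∧ x ≠ 0 ∧ 1 - y ≠ 0 ∧ ¬ (y - x = 1 ∧ 1 - y = 1) ∧ ¬ (y - x = 1 ∧ x = 1)) := by
    rintro ⟨a, b, c, d, e⟩
    exact hne (quad hK hcl hD hC hA hE (by simp [D3]) a b c (by ring) (by simp) (by simp)
      (fun h => h2 ⟨h.1, by linarith [h.2]⟩) d e)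
  have q4 : ¬ (x + y - 1 ≠ 0 ∧ 1 - x ≠ 0 ∧ 1 - y ≠ 0 ∧ ¬ (x + y - 1 = 1 ∧ 1 - y = 1) ∧
      ¬ (x + y - 1 = 1 ∧ 1 - x = 1)) := by
    rintro ⟨a, b, c, d, e⟩
    exact hne (quad hK hcl hC hD hB hE (by simp [D3]) a b c (by ring) (by simp) (by simp)
      (fun h => h1 ⟨by linarith [h.1], by linarith [h.2]⟩) d e)
  clear hA hB hC hD hE hne hcl hK
  grind

lemma para {K : Set (ℝ × ℝ)} (hK : TC K) (hcl : IsClosed K) {A B C D E : ℝ × ℝ} (hA : A ∈ K)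
    (hB : B ∈ K) (hC : C ∈ K) (hD : D ∈ K) (hE : E ∈ K) (h : D3 A B D ≠ 0) (hp : B - A = C - D)
    (h1 : E ≠ A) (h2 : E ≠ B) (h3 : E ≠ C) (h4 : E ≠ D) (h5 : E ≠ midpoint ℝ A C) : K = univ := by
  have hCe : C = B - A + D := by rw [hp]; simp
  have hE' := phi_surj A B D h E
  set x := D3 A E D / D3 A B D
  set y := D3 A B E / D3 A B D
  refine univ_of_preimage h (para_std (TC_preimage hK A B D h) (hcl.preimage (phi_cont A B D)) (x := x)
      (y := y) ?_ ?_ ?_ ?_ ?_ ?_ ?_ ?_ ?_ ?_)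
  · simpa [phi] using hA
  · simpa [phi] using hB
  · simpa [phi] using hD
  · have : phi A B D (1, 1) = C := by rw [hCe]; ext <;> simp [phi] <;> ring
    rw [mem_preimage, this]; exact hC
  · rw [mem_preimage, ← hE']; exact hE
  · rintro ⟨hx, hy⟩; apply h1; rw [hE', hx, hy]; simp [phi]
  · rintro ⟨hx, hy⟩; apply h2; rw [hE', hx, hy]; simp [phi]
  · rintro ⟨hx, hy⟩; apply h4; rw [hE', hx, hy]; simp [phi]
  · rintro ⟨hx, hy⟩; apply h3; rw [hE', hx, hy, hCe]; ext <;> simp [phi] <;> ring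
  · rintro ⟨hx, hy⟩; apply h5; rw [hE', hx, hy, hCe, midpoint_eq_smul_add]; ext <;> simp [phi] <;> ring

lemma mem_line {a b x : ℝ × ℝ} (h : a ≠ b) : x ∈ line a b ↔ D3 a b x = 0 := by
  unfold line
  rw [mem_affineSpan_pair_iff_exists_lineMap_eq]
  constructor
  · rintro ⟨r, rfl⟩
    simp only [D3, AffineMap.lineMap_apply, vsub_eq_sub, vadd_eq_add, Prod.fst_add, Prod.snd_add,
      Prod.smul_fst, Prod.smul_snd, Prod.fst_sub, Prod.snd_sub, smul_eq_mul]
    ring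
  · intro hd
    simp only [D3] at hd
    by_cases h1 : b.1 - a.1 = 0
    · have h2 : b.2 - a.2 ≠ 0 := by
        intro h2; apply h; ext <;> linarith
      refine ⟨(x.2 - a.2) / (b.2 - a.2), ?_⟩
      rw [h1, zero_mul, zero_sub, neg_eq_zero] at hd
      have := (mul_eq_zero.1 hd).resolve_left h2
      ext
      · simp [AffineMap.lineMap_apply, h1]; linarith
      · simp [AffineMap.lineMap_apply]; field_simp; ring
    · refine ⟨(x.1 - a.1) / (b.1 - a.1), ?_⟩
      ext
      · simp [AffineMap.lineMap_apply]; field_simp; ring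
      · simp [AffineMap.lineMap_apply]; field_simp; linarith

lemma par_aux {a b c d x z : ℝ × ℝ} (hab : a ≠ b) (h : cr4 a b c d = 0)
    (h1 : D3 a b x = 0) (h2 : D3 c d x = 0) (h3 : D3 a b z = 0) : D3 c d z = 0 := by
  simp only [D3, cr4] at *
  by_cases h4 : b.1 - a.1 = 0
  · have h5 : b.2 - a.2 ≠ 0 := by
      intro h2; apply hab; ext <;> linarith
    apply mul_left_cancel₀ h5
    grind
  · apply mul_left_cancel₀ h4
    grind

lemma mem_interT {S : Set (ℝ × ℝ)} {x : ℝ × ℝ} : x ∈ interT S ↔ ∃ a ∈ S, ∃ b ∈ S, ∃ c ∈ S, ∃ d ∈ S,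
    cr4 a b c d ≠ 0 ∧ D3 a b x = 0 ∧ D3 c d x = 0 := by
  constructor
  · rintro ⟨a, ha, b, hb, c, hc, d, hd, hab, hcd, hne, h1, h2⟩
    rw [mem_line hab] at h1
    rw [mem_line hcd] at h2
    refine ⟨a, ha, b, hb, c, hc, d, hd, ?_, h1, h2⟩
    intro h
    apply hne
    ext z
    have h' : cr4 c d a b = 0 := by simp only [cr4] at *; linarith
    rw [mem_line hab, mem_line hcd]
    exact ⟨fun h3 => par_aux hab h h1 h2 h3, fun h3 => par_aux hcd h' h2 h1 h3⟩
  · rintro ⟨a, ha, b, hb, c, hc, d, hd, h, h1, h2⟩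
    have hab : a ≠ b := by rintro rfl; apply h; simp [cr4]
    have hcd : c ≠ d := by rintro rfl; apply h; simp [cr4]
    refine ⟨a, ha, b, hb, c, hc, d, hd, hab, hcd, ?_, (mem_line hab).2 h1, (mem_line hcd).2 h2⟩
    intro he
    have e1 : D3 a b c = 0 := by
      rw [← mem_line hab, he, mem_line hcd]; simp [D3]
    have e2 : D3 a b d = 0 := by
      rw [← mem_line hab, he, mem_line hcd]; simp only [D3]; ring
    apply h
    simp only [D3, cr4] at *; linarith

lemma interT_mono : Monotone interT := by
  intro S S' h x hx
  rw [mem_interT] at *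
  obtain ⟨a, ha, b, hb, c, hc, d, hd, hh⟩ := hx
  exact ⟨a, h ha, b, h hb, c, h hc, d, h hd, hh⟩

lemma collinear_of_line {S : Set (ℝ × ℝ)} {a b : ℝ × ℝ} (hab : a ≠ b) (h : ∀ x ∈ S, D3 a b x = 0) :
    S ⊆ line a b ∧ Collinear ℝ S := by
  have h1 : S ⊆ line a b := fun x hx => (mem_line hab).2 (h x hx)
  refine ⟨h1, (collinear_iff_exists_forall_eq_smul_vadd S).2 ⟨a, b - a, fun x hx => ?_⟩⟩
  have hx' := h1 hx
  unfold line at hx'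
  obtain ⟨r, rfl⟩ := mem_affineSpan_pair_iff_exists_lineMap_eq.1 hx'
  exact ⟨r, by simp [AffineMap.lineMap_apply]⟩

lemma D3_of_collinear {S : Set (ℝ × ℝ)} (h : Collinear ℝ S) {a b c d : ℝ × ℝ} (ha : a ∈ S) (hb : b ∈ S)
    (hc : c ∈ S) (hd : d ∈ S) : cr4 a b c d = 0 := by
  obtain ⟨p0, v, hv⟩ := (collinear_iff_exists_forall_eq_smul_vadd S).1 h
  obtain ⟨r1, rfl⟩ := hv a ha
  obtain ⟨r2, rfl⟩ := hv b hb
  obtain ⟨r3, rfl⟩ := hv c hc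
  obtain ⟨r4, rfl⟩ := hv d hd
  simp [cr4]; ring

lemma exists_noncol {S : Set (ℝ × ℝ)} (h : ¬ Collinear ℝ S) :
    ∃ a ∈ S, ∃ b ∈ S, ∃ c ∈ S, D3 a b c ≠ 0 := by
  by_contra! hcon
  apply h
  by_cases hs : S.Subsingleton
  · rcases hs.eq_empty_or_singleton with rfl | ⟨x, rfl⟩
    · exact collinear_empty ℝ _
    · exact collinear_singleton ℝ x
  · obtain ⟨a, ha, b, hb, hab⟩ := Set.not_subsingleton_iff.1 hs
    exact (collinear_of_line hab (fun x hx => hcon a ha b hb x hx)).2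

lemma subset_interT {S : Set (ℝ × ℝ)} (h : ¬ Collinear ℝ S) : S ⊆ interT S := by
  obtain ⟨a, ha, b, hb, c, hc, habc⟩ := exists_noncol h
  intro p hp
  have key : ∀ q ∈ S, ∀ r ∈ S, D3 p q r ≠ 0 → p ∈ interT S := by
    intro q hq r hr hd
    exact mem_interT.2 ⟨p, hp, q, hq, p, hp, r, hr, hd, by simp [D3], by simp [D3]⟩
  by_contra hn
  have h1 : D3 p a b = 0 := by by_contra h1; exact hn (key a ha b hb h1)
  have h2 : D3 p b c = 0 := by by_contra h1; exact hn (key b hb c hc h1)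
  have h3 : D3 p c a = 0 := by by_contra h1; exact hn (key c hc a ha h1)
  apply habc
  simp only [D3] at *
  linarith

lemma TC_iUnion {S : Set (ℝ × ℝ)} (h : ¬ Collinear ℝ S) : TC (⋃ i, interT^[i] S) := by
  have hm : Monotone fun n => interT^[n] S := interT_mono.monotone_iterate_of_le_map (subset_interT h)
  intro a b c d x ha hb hc hd h1 h2 h3
  rw [mem_iUnion] at *
  obtain ⟨i, ha⟩ := ha
  obtain ⟨j, hb⟩ := hb
  obtain ⟨k, hc⟩ := hc
  obtain ⟨l, hd⟩ := hd
  refine ⟨(i + j + k + l) + 1, ?_⟩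
  rw [Function.iterate_succ_apply', mem_interT]
  exact ⟨a, hm (by omega : i ≤ i + j + k + l) ha, b, hm (by omega : j ≤ i + j + k + l) hb,
    c, hm (by omega : k ≤ i + j + k + l) hc, d, hm (by omega : l ≤ i + j + k + l) hd, h1, h2, h3⟩

lemma col_trans {a b c d : ℝ × ℝ} (hab : a ≠ b) (h1 : D3 a b c = 0) (h2 : D3 a b d = 0) :
    D3 a c d = 0 := by
  simp only [D3] at *
  by_cases h4 : b.1 - a.1 = 0
  · have h5 : b.2 - a.2 ≠ 0 := by
      intro h2; apply hab; ext <;> linarith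
    apply mul_left_cancel₀ h5
    grind
  · apply mul_left_cancel₀ h4
    grind

lemma D3_swap (a b c : ℝ × ℝ) : D3 a c b = - D3 a b c := by simp only [D3]; ring
lemma D3_rot (a b c : ℝ × ℝ) : D3 b c a = D3 a b c := by simp only [D3]; ring

/-- General position. -/
def GP (a b c d : ℝ × ℝ) : Prop := D3 a b c ≠ 0 ∧ D3 a b d ≠ 0 ∧ D3 a c d ≠ 0 ∧ D3 b c d ≠ 0

/-- Three points on a line and two off it contain a general-position quadruple. -/
lemma gp_of_line {S : Set (ℝ × ℝ)} {a b d c f : ℝ × ℝ} (ha : a ∈ S) (hb : b ∈ S) (hd : d ∈ S) (hc : c ∈ S)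
    (hf : f ∈ S) (had : a ≠ d) (hbd : b ≠ d) (hcol : D3 a b d = 0) (hcf : c ≠ f)
    (h1 : D3 a b c ≠ 0) (h2 : D3 a b f ≠ 0) : ∃ a ∈ S, ∃ b ∈ S, ∃ c ∈ S, ∃ d ∈ S, GP a b c d := by
  have off : ∀ z, D3 a b z ≠ 0 → D3 a d z ≠ 0 ∧ D3 b d z ≠ 0 := by
    intro z hz
    refine ⟨fun h => hz ?_, fun h => hz ?_⟩
    · refine col_trans had ?_ h
      rw [D3_swap, hcol, neg_zero]
    · have : D3 b a z = 0 := col_trans hbd (by rw [D3_rot, hcol]) h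
      simp only [D3] at *; linarith
  have key : ∀ p ∈ S, ∀ q ∈ S, D3 p q c ≠ 0 → D3 p q f ≠ 0 → D3 c f p ≠ 0 → D3 c f q ≠ 0 →
      ∃ a ∈ S, ∃ b ∈ S, ∃ c ∈ S, ∃ d ∈ S, GP a b c d := by
    intro p hp q hq e1 e2 e3 e4
    refine ⟨p, hp, q, hq, c, hc, f, hf, e1, e2, ?_, ?_⟩
    · rwa [← D3_rot]
    · rwa [← D3_rot]
  have two : ∀ p q, D3 p q c ≠ 0 → D3 c f p = 0 → D3 c f q ≠ 0 := by
    intro p q e1 e2 e3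
    apply e1
    have := col_trans hcf e2 e3
    rwa [← D3_rot] at this
  have o1 := off c h1
  have o2 := off f h2
  by_cases ea : D3 c f a = 0
  · exact key b hb d hd o1.2 o2.2 (two a b h1 ea) (two a d o1.1 ea)
  · by_cases eb : D3 c f b = 0
    · exact key a ha d hd o1.1 o2.1 ea (two b d o1.2 eb)
    · exact key a ha b hb h1 h2 ea eb

lemma exists_gp {S : Set (ℝ × ℝ)} (h : ¬ Collinear ℝ S)
    (h2 : ¬ ∃ p ∈ S, Collinear ℝ (S \ {p} : Set (ℝ × ℝ)) ∧ p ∉ affineSpan ℝ (S \ {p})) :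
    ∃ a ∈ S, ∃ b ∈ S, ∃ c ∈ S, ∃ d ∈ S, GP a b c d := by
  have off : ∀ p ∈ S, ∀ q ∈ S, ∀ r ∈ S, D3 p q r ≠ 0 → ∃ x ∈ S, x ≠ p ∧ D3 q r x ≠ 0 := by
    intro p hp q hq r hr hd
    by_contra! hcon
    have hqr : q ≠ r := by rintro rfl; apply hd; simp only [D3]; ring
    obtain ⟨e1, e2⟩ := collinear_of_line (S := S \ {p}) hqr (fun x hx => hcon x hx.1 hx.2)
    refine h2 ⟨p, hp, e2, ?_⟩
    intro hmem
    have := (affineSpan_le.2 e1) hmem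
    rw [mem_line hqr, D3_rot] at this
    exact hd this
  obtain ⟨a, ha, b, hb, c, hc, habc⟩ := exists_noncol h
  have hbca : D3 b c a ≠ 0 := by rwa [D3_rot]
  have hcab : D3 c a b ≠ 0 := by rwa [D3_rot]
  obtain ⟨d, hd, hda, hbcd⟩ := off a ha b hb c hc habc
  obtain ⟨e, he, heb, hcae⟩ := off b hb c hc a ha hbca
  obtain ⟨f, hf, hfc, habf⟩ := off c hc a ha b hb hcab
  have hab : a ≠ b := by rintro rfl; apply habc; simp only [D3]; ring
  have hac : a ≠ c := by rintro rfl; apply habc; simp only [D3]; ring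
  by_cases k1 : D3 a b d = 0
  · have hbd : b ≠ d := by rintro rfl; apply hbcd; simp only [D3]; ring
    exact gp_of_line ha hb hd hc hf hda.symm hbd k1 hfc.symm habc habf
  by_cases k2 : D3 a c d = 0
  · have hcd : c ≠ d := by rintro rfl; apply hbcd; simp only [D3]; ring
    refine gp_of_line ha hc hd hb he hda.symm hcd k2 heb.symm ?_ ?_
    · rw [D3_swap]; exact neg_ne_zero.2 habc
    · intro h; apply hcae; simp only [D3] at *; linarith
  exact ⟨a, ha, b, hb, c, hc, d, hd, habc, k1, k2, hbcd⟩

lemma not_dense_of_closed {S F : Set (ℝ × ℝ)} (hF : F.Finite) (hS : S ⊆ F) (hT : interT F ⊆ F) :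
    ¬ Dense (⋃ i, interT^[i] S) := by
  intro hd
  have hsub : (⋃ i, interT^[i] S) ⊆ F := by
    apply iUnion_subset
    intro i
    induction i with
    | zero => exact hS
    | succ n ih => rw [Function.iterate_succ_apply']; exact (interT_mono ih).trans hT
  have h1 := (hd.mono hsub).closure_eq
  rw [hF.isClosed.closure_eq] at h1
  rw [h1] at hF
  exact Set.infinite_univ hF

lemma pencil_closed {S : Set (ℝ × ℝ)} {p : ℝ × ℝ} (hp : p ∈ S) (h : Collinear ℝ (S \ {p} : Set (ℝ × ℝ))) :
    interT S ⊆ S := by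
  intro x hx
  obtain ⟨a, ha, b, hb, c, hc, d, hd, hn, h1, h2⟩ := mem_interT.1 hx
  have col : ∀ q ∈ S, ∀ r ∈ S, ∀ s ∈ S, q ≠ p → r ≠ p → s ≠ p → D3 q r s = 0 := by
    intro q hq r hr s hs e1 e2 e3
    exact D3_of_collinear h (a := q) (b := r) (c := q) (d := s) ⟨hq, e1⟩ ⟨hr, e2⟩ ⟨hq, e1⟩ ⟨hs, e3⟩
  have key : ∀ y ∈ S, D3 a b y = 0 → D3 c d y = 0 → x ∈ S := by
    intro y hy e1 e2
    rw [inter_unique hn h1 h2 e1 e2]; exact hy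
  have L : ∀ u v : ℝ × ℝ, D3 u v u = 0 := by intro u v; simp [D3]
  have R : ∀ u v : ℝ × ℝ, D3 u v v = 0 := by intro u v; simp only [D3]; ring
  have hab : a ≠ b := by rintro rfl; apply hn; simp [cr4]
  have hcd : c ≠ d := by rintro rfl; apply hn; simp [cr4]
  by_cases e1 : a = p <;> by_cases e2 : b = p <;> by_cases e3 : c = p <;> by_cases e4 : d = p
  all_goals first
    | exact absurd (e1.trans e2.symm) hab
    | exact absurd (e3.trans e4.symm) hcd
    | exact key p hp (by rw [e1]; exact L _ _) (by rw [e3]; exact L _ _)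
    | exact key p hp (by rw [e1]; exact L _ _) (by rw [e4]; exact R _ _)
    | exact key p hp (by rw [e2]; exact R _ _) (by rw [e3]; exact L _ _)
    | exact key p hp (by rw [e2]; exact R _ _) (by rw [e4]; exact R _ _)
    | exact key b hb (R _ _) (col c hc d hd b hb e3 e4 e2)
    | exact key a ha (L _ _) (col c hc d hd a ha e3 e4 e1)
    | exact key c hc (col a ha b hb c hc e1 e2 e3) (L _ _)
    | exact key d hd (col a ha b hb d hd e1 e2 e4) (R _ _)

/-- The standard square with its center. -/
def isSq (z : ℝ × ℝ) : Prop := (z.1 = 0 ∧ z.2 = 0) ∨ (z.1 = 1 ∧ z.2 = 0) ∨ (z.1 = 1 ∧ z.2 = 1) ∨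
  (z.1 = 0 ∧ z.2 = 1) ∨ (z.1 = 1 / 2 ∧ z.2 = 1 / 2)

lemma sq_line {a b x : ℝ × ℝ} (ha : isSq a) (hb : isSq b) (hab : a ≠ b) (h : D3 a b x = 0) :
    (b.1 - a.1 = 0 ∧ (x.1 = 0 ∨ x.1 = 1)) ∨ (b.2 - a.2 = 0 ∧ (x.2 = 0 ∨ x.2 = 1)) ∨
    (b.1 - a.1 = b.2 - a.2 ∧ x.1 = x.2) ∨ (b.1 - a.1 = -(b.2 - a.2) ∧ x.1 + x.2 = 1) := by
  have hab' : ¬ (a.1 = b.1 ∧ a.2 = b.2) := fun h => hab (Prod.ext h.1 h.2)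
  simp only [D3] at h
  rcases ha with ⟨h1, h2⟩ | ⟨h1, h2⟩ | ⟨h1, h2⟩ | ⟨h1, h2⟩ | ⟨h1, h2⟩ <;>
  rcases hb with ⟨h3, h4⟩ | ⟨h3, h4⟩ | ⟨h3, h4⟩ | ⟨h3, h4⟩ | ⟨h3, h4⟩ <;>
  rw [h1, h2, h3, h4] at hab' h ⊢ <;>
  first
  | exact absurd ⟨rfl, rfl⟩ hab'
  | grind

lemma sq_closed {a b c d x : ℝ × ℝ} (ha : isSq a) (hb : isSq b) (hc : isSq c) (hd : isSq d)
    (hn : cr4 a b c d ≠ 0) (h1 : D3 a b x = 0) (h2 : D3 c d x = 0) : isSq x := by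
  have hab : a ≠ b := by rintro rfl; apply hn; simp [cr4]
  have hcd : c ≠ d := by rintro rfl; apply hn; simp [cr4]
  have k1 := sq_line ha hb hab h1
  have k2 := sq_line hc hd hcd h2
  simp only [cr4] at hn
  unfold isSq
  clear ha hb hc hd h1 h2 hab hcd
  rcases k1 with ⟨e1, e2 | e2⟩ | ⟨e1, e2 | e2⟩ | ⟨e1, e2⟩ | ⟨e1, e2⟩ <;>
  rcases k2 with ⟨e3, e4 | e4⟩ | ⟨e3, e4 | e4⟩ | ⟨e3, e4⟩ | ⟨e3, e4⟩ <;>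
  first
  | (exfalso; apply hn; rw [e1, e3]; ring1)
  | grind

lemma para_closed {A B C D : ℝ × ℝ} (h : D3 A B D ≠ 0) (hp : B - A = C - D) :
    interT {A, B, C, D, midpoint ℝ A C} ⊆ {A, B, C, D, midpoint ℝ A C} := by
  have hCe : C = B - A + D := by rw [hp]; simp
  have iff_sq : ∀ z, z ∈ ({A, B, C, D, midpoint ℝ A C} : Set (ℝ × ℝ)) ↔ ∃ w, isSq w ∧ z = phi A B D w := by
    have e1 : phi A B D (0, 0) = A := by simp [phi]
    have e2 : phi A B D (1, 0) = B := by simp [phi]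
    have e3 : phi A B D (1, 1) = C := by rw [hCe]; ext <;> simp [phi] <;> ring
    have e4 : phi A B D (0, 1) = D := by simp [phi]
    have e5 : phi A B D (1 / 2, 1 / 2) = midpoint ℝ A C := by
      rw [hCe, midpoint_eq_smul_add]; ext <;> simp [phi] <;> ring
    intro z
    constructor
    · rintro (rfl | rfl | rfl | rfl | rfl)
      · exact ⟨(0, 0), by simp [isSq], e1.symm⟩
      · exact ⟨(1, 0), by simp [isSq], e2.symm⟩
      · exact ⟨(1, 1), by simp [isSq], e3.symm⟩
      · exact ⟨(0, 1), by simp [isSq], e4.symm⟩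
      · exact ⟨(1 / 2, 1 / 2), by simp [isSq], e5.symm⟩
    · rintro ⟨⟨u, v⟩, hw, rfl⟩
      rcases hw with ⟨h1, h2⟩ | ⟨h1, h2⟩ | ⟨h1, h2⟩ | ⟨h1, h2⟩ | ⟨h1, h2⟩ <;> simp only at h1 h2 <;> rw [h1, h2]
      · rw [e1]; simp
      · rw [e2]; simp
      · rw [e3]; simp
      · rw [e4]; simp
      · rw [e5]; simp
  intro x hx
  obtain ⟨a, ha, b, hb, c, hc, d, hd, hn, h1, h2⟩ := mem_interT.1 hx
  rw [iff_sq] at ha hb hc hd ⊢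
  obtain ⟨a, ha, rfl⟩ := ha
  obtain ⟨b, hb, rfl⟩ := hb
  obtain ⟨c, hc, rfl⟩ := hc
  obtain ⟨d, hd, rfl⟩ := hd
  have hx' := phi_surj A B D h x
  rw [hx', D3_phi] at h1 h2
  rw [cr4_phi] at hn
  exact ⟨_, sq_closed ha hb hc hd (right_ne_zero_of_mul hn) ((mul_eq_zero.1 h1).resolve_left h)
    ((mul_eq_zero.1 h2).resolve_left h), hx'⟩

lemma D3_of_para {A B C D : ℝ × ℝ} (h : IsParallelogram A B C D) : D3 A B D ≠ 0 := by
  intro h0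
  apply h.2.2
  have hAB : A ≠ B := by rintro rfl; exact h.2.1 (sub_self _)
  refine (collinear_of_line hAB ?_).2
  rintro x (rfl | rfl | rfl)
  · simp [D3]
  · simp only [D3]; ring
  · exact h0

lemma para_of_D3 {A B C D : ℝ × ℝ} (h : D3 A B D ≠ 0) (hp : B - A = C - D) : IsParallelogram A B C D := by
  refine ⟨hp, ?_, ?_⟩
  · intro h0
    rw [sub_eq_zero] at h0
    apply h; rw [h0]; simp [D3]
  · intro hc
    exact h (D3_of_collinear hc (a := A) (b := B) (c := A) (d := D) (by simp) (by simp) (by simp) (by simp))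

lemma gp_univ {K : Set (ℝ × ℝ)} (hK : TC K) (hcl : IsClosed K) {A B C D : ℝ × ℝ} (hA : A ∈ K) (hB : B ∈ K)
    (hC : C ∈ K) (hD : D ∈ K) (h : GP A B C D) : K = univ ∨ IsParallelogram A B D C ∨
      IsParallelogram B A D C ∨ IsParallelogram C A D B := by
  obtain ⟨g1, g2, g3, g4⟩ := h
  have hs := phi_surj A B C g1 D
  set x := D3 A D C / D3 A B C with hx
  set y := D3 A B D / D3 A B C with hy
  have hx0 : x ≠ 0 := div_ne_zero (by rw [D3_swap]; exact neg_ne_zero.2 g3) g1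
  have hy0 : y ≠ 0 := div_ne_zero g2 g1
  have e1 : D.1 = (1 - x - y) * A.1 + x * B.1 + y * C.1 := by
    have := congrArg Prod.fst hs
    simp only [phi] at this; rw [this]; ring
  have e2 : D.2 = (1 - x - y) * A.2 + x * B.2 + y * C.2 := by
    have := congrArg Prod.snd hs
    simp only [phi] at this; rw [this]; ring
  have hz0 : 1 - x - y ≠ 0 := by
    intro h0
    apply g4
    have : D3 B C D = (1 - x - y) * D3 A B C := by simp only [D3, e1, e2]; ring
    rw [this, h0, zero_mul]
  clear_value x y
  by_cases k1 : x = 1 ∧ y = 1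
  · right; left
    apply para_of_D3 g1
    rw [k1.1, k1.2] at e1 e2
    ext <;> simp <;> linarith
  by_cases k2 : 1 - x - y = 1 ∧ y = 1
  · right; right; left
    apply para_of_D3
    · intro h0; apply g1; simp only [D3] at *; linarith
    · have hx' : x = -1 := by linarith [k2.1, k2.2]
      rw [hx', k2.2] at e1 e2
      ext <;> simp <;> linarith
  by_cases k3 : 1 - x - y = 1 ∧ x = 1
  · right; right; right
    apply para_of_D3
    · intro h0; apply g1; simp only [D3] at *; linarith
    · have hx' : y = -1 := by linarith [k3.1, k3.2]
      rw [hx', k3.2] at e1 e2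
      ext <;> simp <;> linarith
  left
  exact quad hK hcl hA hB hC hD g1 hz0 hx0 hy0 (by ring) e1 e2 k1 k2 k3

lemma exc_or_univ {S K : Set (ℝ × ℝ)} (hK : TC K) (hcl : IsClosed K) (hSK : S ⊆ K) {A B C D : ℝ × ℝ}
    (hA : A ∈ S) (hB : B ∈ S) (hC : C ∈ S) (hD : D ∈ S) (hp : IsParallelogram A B C D)
    (h4 : ¬ ∃ A B C D : ℝ × ℝ, IsParallelogram A B C D ∧ S = {A, B, C, D})
    (h5 : ¬ ∃ A B C D : ℝ × ℝ, IsParallelogram A B C D ∧ S = {A, B, C, D, midpoint ℝ A C}) :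
    K = univ := by
  by_contra hne
  have key : ∀ E ∈ S, E = A ∨ E = B ∨ E = C ∨ E = D ∨ E = midpoint ℝ A C := by
    intro E hE
    by_contra! hcon
    exact hne (para hK hcl (hSK hA) (hSK hB) (hSK hC) (hSK hD) (hSK hE) (D3_of_para hp) hp.1
      hcon.1 hcon.2.1 hcon.2.2.1 hcon.2.2.2.1 hcon.2.2.2.2)
  by_cases hm : midpoint ℝ A C ∈ S
  · apply h5
    refine ⟨A, B, C, D, hp, Set.Subset.antisymm key ?_⟩
    rintro z (rfl | rfl | rfl | rfl | rfl) <;> assumption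
  · apply h4
    refine ⟨A, B, C, D, hp, Set.Subset.antisymm ?_ ?_⟩
    · intro z hz
      rcases key z hz with h | h | h | h | h
      · simp [h]
      · simp [h]
      · simp [h]
      · simp [h]
      · exact absurd (h ▸ hz) hm
    · rintro z (rfl | rfl | rfl | rfl) <;> assumption

/-- For a finite `S ⊆ ℝ²`, the union `⋃ i, Tⁱ(S)` is dense in the plane iff `S` is not
(1) empty, (2) collinear, (3) a collinear set plus one point off its line,
(4) the vertices of a nondegenerate parallelogram, or (5) such vertices together with
the intersection of the diagonals. -/
theorem dense_iff_not_exceptional (S : Set (ℝ × ℝ)) (hS : S.Finite) :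
    Dense (⋃ i, interT^[i] S) ↔
      ¬ (S = ∅ ∨
         Collinear ℝ S ∨
         (∃ p ∈ S, Collinear ℝ (S \ {p}) ∧ p ∉ affineSpan ℝ (S \ {p})) ∨
         (∃ A B C D : ℝ × ℝ, IsParallelogram A B C D ∧ S = {A, B, C, D}) ∨
         (∃ A B C D : ℝ × ℝ, IsParallelogram A B C D ∧
            S = {A, B, C, D, midpoint ℝ A C})) := by
  constructor
  · rintro hd (h | h | ⟨p, hp, h, -⟩ | ⟨A, B, C, D, hp, rfl⟩ | ⟨A, B, C, D, hp, rfl⟩)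
    · subst h
      refine not_dense_of_closed hS (subset_refl _) ?_ hd
      intro x hx
      obtain ⟨a, ha, -⟩ := mem_interT.1 hx
      exact ha
    · refine not_dense_of_closed hS (subset_refl _) ?_ hd
      intro x hx
      obtain ⟨a, ha, b, hb, c, hc, d, hd', hn, -⟩ := mem_interT.1 hx
      exact absurd (D3_of_collinear h ha hb hc hd') hn
    · exact not_dense_of_closed hS (subset_refl _) (pencil_closed hp h) hd
    · refine not_dense_of_closed (F := {A, B, C, D, midpoint ℝ A C}) (Set.toFinite _) ?_
        (para_closed (D3_of_para hp) hp.1) hd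
      rintro z (rfl | rfl | rfl | rfl) <;> simp
    · exact not_dense_of_closed hS (subset_refl _) (para_closed (D3_of_para hp) hp.1) hd
  · intro h
    simp only [not_or] at h
    obtain ⟨-, h2, h3, h4, h5⟩ := h
    have hK := TC_closure (TC_iUnion h2)
    have hSK : S ⊆ closure (⋃ i, interT^[i] S) :=
      (subset_iUnion (fun i => interT^[i] S) 0).trans subset_closure
    rw [dense_iff_closure_eq]
    obtain ⟨a, ha, b, hb, c, hc, d, hd, hg⟩ := exists_gp h2 h3
    rcases gp_univ hK isClosed_closure (hSK ha) (hSK hb) (hSK hc) (hSK hd) hg with h | h | h | h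
    · exact h
    · exact exc_or_univ hK isClosed_closure hSK ha hb hd hc h h4 h5
    · exact exc_or_univ hK isClosed_closure hSK hb ha hd hc h h4 h5
    · exact exc_or_univ hK isClosed_closure hSK hc ha hd hb h h4 h5
end
end

section
/- Let A, B, C be noncollinear points in ℝ² and let P be a point in the interior of the convex hull of {A, B, C}. Then there exist sequences of points Aₙ, Bₙ, Cₙ (n = 1, 2, …), each belonging to ⋃_{j ≥ 0} Tʲ({A, B, C, P}), such that for every n the point P lies in the interior of the convex hull of {Aₙ, Bₙ, Cₙ}, and Aₙ → P, Bₙ → P, Cₙ → P as n → ∞. -/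
open Set Filter

noncomputable section

/-- planar cross product -/
def cr (u v : ℝ × ℝ) : ℝ := u.1 * v.2 - u.2 * v.1

lemma cr_line {a b x : ℝ × ℝ} (h : x ∈ line a b) : cr (b - a) (x - a) = 0 := by
  unfold line at h
  rw [mem_affineSpan_pair_iff_exists_lineMap_eq] at h
  obtain ⟨r, rfl⟩ := h
  simp [cr, AffineMap.lineMap_apply]
  ring

lemma mem_line_of {a b x : ℝ × ℝ} (s : ℝ) (h : x = a + s • (b - a)) : x ∈ line a b := by
  unfold line
  rw [mem_affineSpan_pair_iff_exists_lineMap_eq]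
  exact ⟨s, by rw [h]; simp [AffineMap.lineMap_apply, add_comm]⟩

lemma mem_T {S : Set (ℝ × ℝ)} {a b c d x : ℝ × ℝ} (ha : a ∈ S) (hb : b ∈ S) (hc : c ∈ S)
    (hd : d ∈ S) (h : cr (b - a) (d - a) ≠ 0) (hcd : c ≠ d) (s t : ℝ)
    (hx : x = a + s • (b - a)) (hx' : x = c + t • (d - c)) : x ∈ interT S := by
  refine ⟨a, ha, b, hb, c, hc, d, hd, ?_, hcd, ?_, mem_line_of s hx, mem_line_of t hx'⟩
  · rintro rfl
    simp [cr] at h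
  · intro e
    apply h
    apply cr_line
    rw [e]
    exact mem_line_of 1 (by simp)

lemma mem_T_self {S : Set (ℝ × ℝ)} {a b d : ℝ × ℝ} (ha : a ∈ S) (hb : b ∈ S)
    (hd : d ∈ S) (h : cr (b - a) (d - a) ≠ 0) : a ∈ interT S :=
  mem_T ha hb ha hd h (by rintro rfl; simp [cr] at h) 0 0 (by simp) (by simp)

lemma collinear_of_cr {A B C : ℝ × ℝ} (h : cr (B - A) (C - A) = 0) :
    Collinear ℝ ({A, B, C} : Set (ℝ × ℝ)) := by
  by_cases hB : B = A
  · subst hB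
    simpa using collinear_pair ℝ B C
  rw [collinear_iff_of_mem (p₀ := A) (by simp)]
  refine ⟨B - A, ?_⟩
  simp only [Set.mem_insert_iff, Set.mem_singleton_iff, forall_eq_or_imp, forall_eq, vadd_eq_add]
  refine ⟨⟨0, by simp⟩, ⟨1, by simp⟩, ?_⟩
  simp only [cr, Prod.fst_sub, Prod.snd_sub] at h
  by_cases h1 : B.1 - A.1 = 0
  · have h2 : B.2 - A.2 ≠ 0 := by
      intro h2
      exact hB (Prod.ext (by linarith) (by linarith))
    refine ⟨(C.2 - A.2) / (B.2 - A.2), ?_⟩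
    ext
    · simp only [Prod.fst_add, Prod.smul_fst, Prod.fst_sub, smul_eq_mul]
      field_simp
      linarith
    · simp only [Prod.snd_add, Prod.smul_snd, Prod.snd_sub, smul_eq_mul]
      field_simp
      linarith
  · refine ⟨(C.1 - A.1) / (B.1 - A.1), ?_⟩
    ext
    · simp only [Prod.fst_add, Prod.smul_fst, Prod.fst_sub, smul_eq_mul]
      field_simp
      linarith
    · simp only [Prod.snd_add, Prod.smul_snd, Prod.snd_sub, smul_eq_mul]
      field_simp
      linarith

lemma cr_of_collinear {A B C : ℝ × ℝ} (h : Collinear ℝ ({A, B, C} : Set (ℝ × ℝ))) :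
    cr (B - A) (C - A) = 0 := by
  rw [collinear_iff_of_mem (p₀ := A) (by simp)] at h
  obtain ⟨v, hv⟩ := h
  obtain ⟨s, hs⟩ := hv B (by simp)
  obtain ⟨t, ht⟩ := hv C (by simp)
  rw [hs, ht]
  simp [cr]
  ring

lemma interior_iff {A B C P : ℝ × ℝ} (h : ¬ Collinear ℝ ({A, B, C} : Set (ℝ × ℝ))) :
    P ∈ interior (convexHull ℝ ({A, B, C} : Set (ℝ × ℝ))) ↔
    ∃ p q r : ℝ, 0 < p ∧ 0 < q ∧ 0 < r ∧ p + q + r = 1 ∧ P = p • A + q • B + r • C := by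
  have hi : AffineIndependent ℝ ![A, B, C] := affineIndependent_iff_not_collinear_set.2 h
  have ht : affineSpan ℝ (Set.range ![A, B, C]) = ⊤ := by
    rw [hi.affineSpan_eq_top_iff_card_eq_finrank_add_one]
    simp
  let b : AffineBasis (Fin 3) ℝ (ℝ × ℝ) := ⟨![A, B, C], hi, ht⟩
  have hb : ({A, B, C} : Set (ℝ × ℝ)) = Set.range b := by
    change _ = Set.range ![A, B, C]
    ext x
    simp [eq_comm]
    tauto
  have b0 : b 0 = A := rfl
  have b1 : b 1 = B := rfl
  have b2 : b 2 = C := rfl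
  rw [hb, b.interior_convexHull]
  constructor
  · intro hP
    refine ⟨b.coord 0 P, b.coord 1 P, b.coord 2 P, hP 0, hP 1, hP 2, ?_, ?_⟩
    · have := b.sum_coord_apply_eq_one P
      rwa [Fin.sum_univ_three] at this
    · have := b.linear_combination_coord_eq_self P
      rw [Fin.sum_univ_three, b0, b1, b2] at this
      exact this.symm
  · rintro ⟨p, q, r, hp, hq, hr, hs, rfl⟩
    have hs' : ∑ i, (![p, q, r] : Fin 3 → ℝ) i = 1 := by simpa [Fin.sum_univ_three] using hs
    have e : p • A + q • B + r • C = Finset.univ.affineCombination ℝ b ![p, q, r] := by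
      rw [Finset.affineCombination_eq_linear_combination _ _ _ hs']
      simp [Fin.sum_univ_three, b0, b1, b2]
    intro i
    rw [e, b.coord_apply_combination_of_mem (Finset.mem_univ i) hs']
    fin_cases i <;> simpa

/-- the barycentric weights of the iterated triangles -/
def wt (p : ℝ) (n : ℕ) : ℝ := 1 / 3 + (-1 / 2) ^ n * (p - 1 / 3)

/-- the vertices of the iterated triangles -/
def vtx (P A : ℝ × ℝ) (p : ℝ) (n : ℕ) : ℝ × ℝ := P + ((-1 / 2) ^ n * p / wt p n) • (A - P)

lemma wt_succ (p : ℝ) (n : ℕ) : wt p (n + 1) = (1 - wt p n) / 2 := by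
  unfold wt; ring

lemma wt_sum {p q r : ℝ} (h : p + q + r = 1) (n : ℕ) : wt p n + wt q n + wt r n = 1 := by
  unfold wt; linear_combination (-1 / 2) ^ n * h

lemma wt_mem {p : ℝ} (h : 0 < p) (h' : p < 1) (n : ℕ) : 0 < wt p n ∧ wt p n < 1 := by
  induction n with
  | zero => constructor <;> simp [wt] <;> linarith
  | succ n ih => rw [wt_succ]; constructor <;> linarith [ih.1, ih.2]

lemma pow_tend : Tendsto (fun n : ℕ => (-1 / 2 : ℝ) ^ n) atTop (nhds 0) :=
  tendsto_pow_atTop_nhds_zero_of_abs_lt_one (by rw [abs_lt]; norm_num)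

lemma vtx_tend (P A : ℝ × ℝ) (p : ℝ) : Tendsto (vtx P A p) atTop (nhds P) := by
  have h1 : Tendsto (wt p) atTop (nhds (1 / 3 + 0 * (p - 1 / 3))) :=
    (pow_tend.mul_const _).const_add _
  have h2 := (((pow_tend.mul_const p).div h1 (by norm_num)).smul_const (A - P)).const_add P
  simp only [zero_mul, zero_div, zero_smul, add_zero] at h2
  exact h2

lemma vtx_succ (P A : ℝ × ℝ) {p : ℝ} (h : 0 < p) (h' : p < 1) (n : ℕ) :
    vtx P A p (n + 1) = P + (-(wt p n / (1 - wt p n))) • (vtx P A p n - P) := by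
  have := wt_mem h h' n
  have h1 : 1 - wt p n ≠ 0 := by linarith
  have h2 : wt p n ≠ 0 := by linarith
  unfold vtx
  rw [wt_succ, add_sub_cancel_left, smul_smul]
  congr 2
  field_simp
  ring

lemma vtx_wt (P A : ℝ × ℝ) {p : ℝ} (h : 0 < p) (h' : p < 1) (n : ℕ) :
    wt p n • (vtx P A p n - P) = ((-1 / 2 : ℝ) ^ n) • (p • (A - P)) := by
  have := wt_mem h h' n
  have h2 : wt p n ≠ 0 := by linarith
  unfold vtx
  rw [add_sub_cancel_left, smul_smul, smul_smul ((-1 / 2 : ℝ) ^ n)]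
  congr 1
  field_simp

lemma cr_vtx (P A B : ℝ × ℝ) {p q : ℝ} (h : 0 < p) (h' : p < 1) (hq : 0 < q) (hq' : q < 1) (n : ℕ)
    (hc : cr (A - P) (B - P) ≠ 0) : cr (vtx P A p n - P) (vtx P B q n - P) ≠ 0 := by
  have e : cr (vtx P A p n - P) (vtx P B q n - P) =
      ((-1 / 2) ^ n * p / wt p n) * ((-1 / 2) ^ n * q / wt q n) * cr (A - P) (B - P) := by
    unfold vtx
    rw [add_sub_cancel_left, add_sub_cancel_left]
    simp only [cr, Prod.smul_fst, Prod.smul_snd, smul_eq_mul]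
    ring
  rw [e]
  have h1 := (wt_mem h h' n).1.ne'
  have h2 := (wt_mem hq hq' n).1.ne'
  have h3 : ((-1 / 2 : ℝ) ^ n) ≠ 0 := pow_ne_zero _ (by norm_num)
  have := h.ne'
  have := hq.ne'
  positivity

/-- one step of the construction -/
lemma step {S : Set (ℝ × ℝ)} {A B C P : ℝ × ℝ} {p q r : ℝ} (hA : A ∈ S) (hB : B ∈ S) (hC : C ∈ S)
    (hP : P ∈ S) (hp1 : p < 1) (hs : p + q + r = 1)
    (h0 : p • (A - P) + q • (B - P) + r • (C - P) = 0)
    (h1 : cr (A - P) (C - P) ≠ 0) (h2 : cr (B - P) (C - P) ≠ 0) :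
    P + (-(p / (1 - p))) • (A - P) ∈ interT S := by
  refine mem_T hP hA hB hC h1 ?_ _ (r / (1 - p)) rfl ?_
  · rintro rfl
    apply h2
    simp only [cr]
    ring
  · have h : 1 - p ≠ 0 := by linarith
    have e1 := congrArg Prod.fst h0
    have e2 := congrArg Prod.snd h0
    simp only [Prod.fst_add, Prod.smul_fst, Prod.fst_sub, smul_eq_mul, Prod.fst_zero] at e1
    simp only [Prod.snd_add, Prod.smul_snd, Prod.snd_sub, smul_eq_mul, Prod.snd_zero] at e2
    obtain rfl : q = 1 - p - r := by linarith
    ext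
    · simp only [Prod.fst_add, Prod.smul_fst, Prod.fst_sub, smul_eq_mul]
      field_simp
      linear_combination -e1
    · simp only [Prod.snd_add, Prod.smul_snd, Prod.snd_sub, smul_eq_mul]
      field_simp
      linear_combination -e2

lemma cr_swap {u v : ℝ × ℝ} (h : cr u v ≠ 0) : cr v u ≠ 0 := by
  intro h'
  apply h
  simp only [cr] at *
  linarith

/-- Given noncollinear `A, B, C` and `P` strictly inside the triangle `ABC`, there are
sequences `Aₙ, Bₙ, Cₙ` of points generated from `{A, B, C, P}` by iterating `T`, all of
whose triangles strictly contain `P`, with `Aₙ, Bₙ, Cₙ → P`. -/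
theorem exists_nested_triangles (A B C P : ℝ × ℝ)
    (hABC : ¬ Collinear ℝ ({A, B, C} : Set (ℝ × ℝ)))
    (hP : P ∈ interior (convexHull ℝ ({A, B, C} : Set (ℝ × ℝ)))) :
    ∃ A' B' C' : ℕ → ℝ × ℝ,
      (∀ n, A' n ∈ ⋃ j, interT^[j] ({A, B, C, P} : Set (ℝ × ℝ))) ∧
      (∀ n, B' n ∈ ⋃ j, interT^[j] ({A, B, C, P} : Set (ℝ × ℝ))) ∧
      (∀ n, C' n ∈ ⋃ j, interT^[j] ({A, B, C, P} : Set (ℝ × ℝ))) ∧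
      (∀ n, P ∈ interior (convexHull ℝ ({A' n, B' n, C' n} : Set (ℝ × ℝ)))) ∧
      Tendsto A' atTop (nhds P) ∧ Tendsto B' atTop (nhds P) ∧ Tendsto C' atTop (nhds P) := by
  obtain ⟨p, q, r, hp, hq, hr, hs, hPe⟩ := (interior_iff hABC).1 hP
  have hp1 : p < 1 := by linarith
  have hq1 : q < 1 := by linarith
  have hr1 : r < 1 := by linarith
  have hD : cr (B - A) (C - A) ≠ 0 := fun h => hABC (collinear_of_cr h)
  obtain rfl : p = 1 - q - r := by linarith
  have hAB : cr (A - P) (B - P) ≠ 0 := by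
    have : cr (A - P) (B - P) = r * cr (B - A) (C - A) := by
      rw [hPe]; simp [cr]; ring
    rw [this]; exact mul_ne_zero hr.ne' hD
  have hBC : cr (B - P) (C - P) ≠ 0 := by
    have : cr (B - P) (C - P) = (1 - q - r) * cr (B - A) (C - A) := by
      rw [hPe]; simp [cr]; ring
    rw [this]; exact mul_ne_zero hp.ne' hD
  have hCA : cr (C - P) (A - P) ≠ 0 := by
    have : cr (C - P) (A - P) = q * cr (B - A) (C - A) := by
      rw [hPe]; simp [cr]; ring
    rw [this]; exact mul_ne_zero hq.ne' hD
  have hz : (1 - q - r) • (A - P) + q • (B - P) + r • (C - P) = 0 := by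
    nth_rewrite 1 2 3 [hPe]
    ext <;> simp <;> ring
  generalize 1 - q - r = p at *
  have hzn : ∀ n, wt p n • (vtx P A p n - P) + wt q n • (vtx P B q n - P)
      + wt r n • (vtx P C r n - P) = 0 := by
    intro n
    rw [vtx_wt P A hp hp1, vtx_wt P B hq hq1, vtx_wt P C hr hr1, ← smul_add, ← smul_add, hz,
      smul_zero]
  set S : Set (ℝ × ℝ) := {A, B, C, P} with hS
  have hAS : A ∈ S := by simp [hS]
  have hBS : B ∈ S := by simp [hS]
  have hCS : C ∈ S := by simp [hS]
  have hPS : P ∈ S := by simp [hS]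
  have hsub : S ≤ interT S := by
    have hA : A ∈ interT S := mem_T_self hAS hBS hCS hD
    have hB : B ∈ interT S := mem_T_self hBS hCS hAS (by
      convert hD using 1; simp [cr]; ring)
    have hC : C ∈ interT S := mem_T_self hCS hAS hBS (by
      convert hD using 1; simp [cr]; ring)
    have hP : P ∈ interT S := mem_T_self hPS hAS hBS hAB
    rintro x (rfl | rfl | rfl | rfl) <;> assumption
  have hmono : Monotone fun n => interT^[n] S := interT_mono.monotone_iterate_of_le_map hsub
  have key : ∀ n, vtx P A p n ∈ interT^[n] S ∧ vtx P B q n ∈ interT^[n] S ∧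
      vtx P C r n ∈ interT^[n] S := by
    intro n
    induction n with
    | zero =>
      simpa [vtx, wt, hp.ne', hq.ne', hr.ne'] using ⟨hAS, hBS, hCS⟩
    | succ n ih =>
      obtain ⟨iA, iB, iC⟩ := ih
      have iP : P ∈ interT^[n] S := hmono (Nat.zero_le n) hPS
      rw [Function.iterate_succ_apply', vtx_succ P A hp hp1, vtx_succ P B hq hq1,
        vtx_succ P C hr hr1]
      have cAB := cr_vtx P A B hp hp1 hq hq1 n hAB
      have cBC := cr_vtx P B C hq hq1 hr hr1 n hBC
      have cCA := cr_vtx P C A hr hr1 hp hp1 n hCA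
      have sm := wt_sum hs n
      have z := hzn n
      refine ⟨step iA iB iC iP (wt_mem hp hp1 n).2 sm z (cr_swap cCA) cBC,
        step iB iC iA iP (wt_mem hq hq1 n).2 (r := wt p n) (q := wt r n) (by linarith)
          (by rw [← z]; abel) (cr_swap cAB) cCA,
        step iC iA iB iP (wt_mem hr hr1 n).2 (r := wt q n) (q := wt p n) (by linarith)
          (by rw [← z]; abel) (cr_swap cBC) cAB⟩
  refine ⟨vtx P A p, vtx P B q, vtx P C r, fun n => mem_iUnion.2 ⟨n, (key n).1⟩,
    fun n => mem_iUnion.2 ⟨n, (key n).2.1⟩, fun n => mem_iUnion.2 ⟨n, (key n).2.2⟩, ?_,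
    vtx_tend _ _ _, vtx_tend _ _ _, vtx_tend _ _ _⟩
  intro n
  have sm := wt_sum hs n
  have z := hzn n
  have wp := (wt_mem hp hp1 n).1
  have cBC := cr_vtx P B C hq hq1 hr hr1 n hBC
  have e : P = wt p n • vtx P A p n + wt q n • vtx P B q n + wt r n • vtx P C r n := by
    have : wt p n • vtx P A p n + wt q n • vtx P B q n + wt r n • vtx P C r n
        - (wt p n + wt q n + wt r n) • P = 0 := by
      rw [← z]; module
    rw [sm, one_smul, sub_eq_zero] at this
    exact this.symm
  refine (interior_iff ?_).2 ⟨wt p n, wt q n, wt r n, wp, (wt_mem hq hq1 n).1,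
    (wt_mem hr hr1 n).1, sm, e⟩
  intro hcol
  have h0 := cr_of_collinear hcol
  apply cBC
  generalize vtx P A p n = X at *
  generalize vtx P B q n = Y at *
  generalize vtx P C r n = Z at *
  have : cr (Y - P) (Z - P) = wt p n * cr (Y - X) (Z - X) := by
    obtain h : wt p n = 1 - wt q n - wt r n := by linarith
    rw [h] at e ⊢
    rw [e]; simp [cr]; ring
  rw [this, h0, mul_zero]
end
end
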